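/- Let G_ℓ be obtained by the powering construction from the base instance G₁ built from a connected unweighted MaxCut instance H with m edges. (i) If H has a cut of size c·m with c > 0, then G_ℓ has a cut of sparsity at most 1/(ℓc). (ii) If every cut of H has size at most s·m with s > 0, then every cut of G_ℓ that separates positive demand has sparsity at least 1/(1 + (ℓ−1)s). -/

import Mathlib

attribute [local instance] Classical.propDecidable

open Finset

namespace Stmt10

/-- A Sparsest Cut instance: a finite vertex set `V` with two designated vertices
`s` and `t`, a finite set `E` of (oriented) supply edges with capacities `cap`, and a
finite set `Dm` of demand pairs with demands `dem`. -/
structure SCI where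
  V : Type
  fV : Fintype V
  dV : DecidableEq V
  s : V
  t : V
  E : Finset (V × V)
  cap : V × V → ℝ
  Dm : Finset (V × V)
  dem : V × V → ℝ

attribute [instance] SCI.fV SCI.dV

namespace SCI

/-- Capacity of a cut `(S, V∖S)`: total capacity of supply edges crossing it. -/
noncomputable def cutCap (I : SCI) (S : Finset I.V) : ℝ :=
  ∑ e ∈ I.E.filter (fun e => ¬((e.1 ∈ S) ↔ (e.2 ∈ S))), I.cap e

/-- Demand separated by a cut `(S, V∖S)`: total demand of demand pairs crossing it. -/
noncomputable def cutDem (I : SCI) (S : Finset I.V) : ℝ :=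
  ∑ q ∈ I.Dm.filter (fun q => ¬((q.1 ∈ S) ↔ (q.2 ∈ S))), I.dem q

end SCI

/-- Vertex set obtained by replacing each capacity edge `e = (u,v)` of `G1` by a copy
of `Gp`, identifying the `s` of the copy with `u` and its `t` with `v`:  the vertices
of `G1` together with, for every edge `e` of `G1`, a copy of the interior (non-`s`,
non-`t`) vertices of `Gp`. -/
abbrev glueV (G1 Gp : SCI) : Type :=
  G1.V ⊕ ({e // e ∈ G1.E} × {v : Gp.V // v ≠ Gp.s ∧ v ≠ Gp.t})

/-- Placement of a vertex `v` of the copy of `Gp` corresponding to edge `e` of `G1`: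
the copy's `s` is identified with `e.1`, its `t` with `e.2`, and interior vertices
keep their identity inside the copy. -/
noncomputable def embed (G1 Gp : SCI) (e : {e // e ∈ G1.E}) (v : Gp.V) : glueV G1 Gp :=
  if h1 : v = Gp.s then Sum.inl e.1.1
  else if h2 : v = Gp.t then Sum.inl e.1.2
  else Sum.inr (e, ⟨v, h1, h2⟩)

/-- One step of the powering operation: replace every capacity edge `e = (u,v)` of
`G1` by a copy of `Gp` (scaled by `cap e`, with its `s` identified with `u` and its
`t` with `v`), and retain the demand edges of `G1` as the new top-level demands. -/
noncomputable def glue (G1 Gp : SCI) : SCI where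
  V := glueV G1 Gp
  fV := inferInstance
  dV := inferInstance
  s := Sum.inl G1.s
  t := Sum.inl G1.t
  E := G1.E.attach.biUnion fun e =>
        Gp.E.image fun f => (embed G1 Gp e f.1, embed G1 Gp e f.2)
  cap := fun p => ∑ e ∈ G1.E.attach, ∑ f ∈ Gp.E,
        if (embed G1 Gp e f.1, embed G1 Gp e f.2) = p then G1.cap e.1 * Gp.cap f else 0
  Dm := (G1.Dm.image fun q => ((Sum.inl q.1 : glueV G1 Gp), (Sum.inl q.2 : glueV G1 Gp))) ∪
        (G1.E.attach.biUnion fun e =>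
          Gp.Dm.image fun f => (embed G1 Gp e f.1, embed G1 Gp e f.2))
  dem := fun p =>
      (∑ q ∈ G1.Dm,
        if ((Sum.inl q.1 : glueV G1 Gp), (Sum.inl q.2 : glueV G1 Gp)) = p
        then G1.dem q else 0) +
      ∑ e ∈ G1.E.attach, ∑ f ∈ Gp.Dm,
        if (embed G1 Gp e f.1, embed G1 Gp e f.2) = p then G1.cap e.1 * Gp.dem f else 0

/-- The powered instance: `Gpow G1 k` is the instance `G_{k+1}` of the paper, i.e.
`Gpow G1 0 = G₁` and `Gpow G1 k = G_{k+1}` is obtained from `G₁` by replacing each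
capacity edge with a copy of `G_k`. -/
noncomputable def Gpow (G1 : SCI) : ℕ → SCI
  | 0 => G1
  | k + 1 => glue G1 (Gpow G1 k)

/-- The base instance `G₁` built from a MaxCut instance `H` on `[n]` with `m` edges:
vertex set `{s,t} ∪ [n]` (`s = inr false`, `t = inr true`), supply edges `(s,i)` and
`(i,t)` of capacity `deg_H(i)/(2m)` for each `i`, and demand `1/m` between `i` and `j`
for each edge `{i,j}` of `H` (each such unordered pair listed once). -/
noncomputable def buildG1 (n : ℕ) (H : SimpleGraph (Fin n)) [DecidableRel H.Adj] : SCI where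
  V := Fin n ⊕ Bool
  fV := inferInstance
  dV := inferInstance
  s := Sum.inr false
  t := Sum.inr true
  E := (Finset.univ.image fun i : Fin n =>
          ((Sum.inr false : Fin n ⊕ Bool), (Sum.inl i : Fin n ⊕ Bool))) ∪
       (Finset.univ.image fun i : Fin n =>
          ((Sum.inl i : Fin n ⊕ Bool), (Sum.inr true : Fin n ⊕ Bool)))
  cap := fun p =>
    match p with
    | (Sum.inr false, Sum.inl i) => (H.degree i : ℝ) / (2 * H.edgeFinset.card)
    | (Sum.inl i, Sum.inr true) => (H.degree i : ℝ) / (2 * H.edgeFinset.card)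
    | _ => 0
  Dm := (Finset.univ.filter fun p : Fin n × Fin n => H.Adj p.1 p.2 ∧ p.1 < p.2).image
          (fun p => ((Sum.inl p.1 : Fin n ⊕ Bool), (Sum.inl p.2 : Fin n ⊕ Bool)))
  dem := fun p =>
    match p with
    | (Sum.inl i, Sum.inl j) => if H.Adj i j then 1 / (H.edgeFinset.card : ℝ) else 0
    | _ => 0

/-- Number of edges of `H` crossing the cut `(A, [n]∖A)`. -/
def bdry {n : ℕ} (H : SimpleGraph (Fin n)) [DecidableRel H.Adj] (A : Finset (Fin n)) : ℕ :=
  ∑ i ∈ A, ∑ j ∈ Aᶜ, if H.Adj i j then 1 else 0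

/-- The trace on the copy `e` of a vertex set of the glued instance. -/
noncomputable def tr (G1 Gp : SCI) (S : Finset (glueV G1 Gp)) (e : {e // e ∈ G1.E}) :
    Finset Gp.V := Finset.univ.filter fun v => embed G1 Gp e v ∈ S

/-- The trace on the vertices of `G1`. -/
noncomputable def tr1 (G1 Gp : SCI) (S : Finset (glueV G1 Gp)) : Finset G1.V :=
  Finset.univ.filter fun v => (Sum.inl v : glueV G1 Gp) ∈ S

lemma mem_tr (G1 Gp : SCI) (S : Finset (glueV G1 Gp)) (e : {e // e ∈ G1.E}) (v : Gp.V) :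
    v ∈ tr G1 Gp S e ↔ embed G1 Gp e v ∈ S := by simp [tr]

lemma mem_tr1 (G1 Gp : SCI) (S : Finset (glueV G1 Gp)) (v : G1.V) :
    v ∈ tr1 G1 Gp S ↔ (Sum.inl v : glueV G1 Gp) ∈ S := by simp [tr1]

lemma s_mem_tr (G1 Gp : SCI) (S : Finset (glueV G1 Gp)) (e : {e // e ∈ G1.E}) :
    Gp.s ∈ tr G1 Gp S e ↔ e.1.1 ∈ tr1 G1 Gp S := by
  rw [mem_tr, mem_tr1]; simp [embed]

lemma t_mem_tr (G1 Gp : SCI) (h : Gp.s ≠ Gp.t) (S : Finset (glueV G1 Gp))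
    (e : {e // e ∈ G1.E}) :
    Gp.t ∈ tr G1 Gp S e ↔ e.1.2 ∈ tr1 G1 Gp S := by
  rw [mem_tr, mem_tr1]; simp [embed, h.symm]

/-- Real-valued indicator of a proposition. -/
noncomputable def ind (P : Prop) : ℝ := if P then 1 else 0

lemma ind_t {P : Prop} (h : P) : ind P = 1 := if_pos h

lemma ind_f {P : Prop} (h : ¬P) : ind P = 0 := if_neg h

lemma ind_nonneg (P : Prop) : 0 ≤ ind P := by unfold ind; split_ifs <;> norm_num

/-- Weight of the pairs of `T` crossing `S`. -/
noncomputable def wsum {V : Type} (T : Finset (V × V)) (w : V × V → ℝ) (S : Finset V) : ℝ :=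
  ∑ e ∈ T, w e * ind (¬((e.1 ∈ S) ↔ (e.2 ∈ S)))

lemma sum_ind {α : Type*} (T : Finset α) (w : α → ℝ) (P : α → Prop) [DecidablePred P] :
    ∑ e ∈ T.filter P, w e = ∑ e ∈ T, w e * ind (P e) := by
  rw [Finset.sum_filter]
  refine Finset.sum_congr rfl fun e _ => ?_
  by_cases h : P e
  · rw [if_pos h, ind_t h, mul_one]
  · rw [if_neg h, ind_f h, mul_zero]

lemma cutCap_eq (I : SCI) (S : Finset I.V) : I.cutCap S = wsum I.E I.cap S := sum_ind _ _ _

lemma cutDem_eq (I : SCI) (S : Finset I.V) : I.cutDem S = wsum I.Dm I.dem S := sum_ind _ _ _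

/-- Summing over the fibres of a map. -/
lemma sum_fib {α β : Type*} (T : Finset β) (A : Finset α) (g : α → β) (w : α → ℝ)
    (P : β → ℝ) (dec : ∀ a p, Decidable (g a = p)) (hg : ∀ a ∈ A, g a ∈ T) :
    ∑ p ∈ T, (∑ a ∈ A, (if g a = p then w a else 0)) * P p
      = ∑ a ∈ A, w a * P (g a) := by
  simp only [Finset.sum_mul]
  rw [Finset.sum_comm]
  refine Finset.sum_congr rfl fun a ha => ?_
  rw [Finset.sum_eq_single (g a)]
  · rw [if_pos rfl]
  · intro b _ hb
    rw [if_neg hb.symm, zero_mul]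
  · intro h
    exact absurd (hg a ha) h

lemma cutCap_glue (G1 Gp : SCI) (S : Finset (glueV G1 Gp)) :
    (glue G1 Gp).cutCap S = ∑ e ∈ G1.E.attach, G1.cap e.1 * Gp.cutCap (tr G1 Gp S e) := by
  refine (cutCap_eq _ _).trans ?_
  simp only [cutCap_eq]
  change ∑ p ∈ (G1.E.attach.biUnion fun e =>
        Gp.E.image fun f => (embed G1 Gp e f.1, embed G1 Gp e f.2)),
        (∑ e ∈ G1.E.attach, ∑ f ∈ Gp.E,
        if (embed G1 Gp e f.1, embed G1 Gp e f.2) = p then G1.cap e.1 * Gp.cap f else 0) *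
        ind (¬((p.1 ∈ S) ↔ (p.2 ∈ S))) = _
  simp only [Finset.sum_mul (s := G1.E.attach)]
  rw [Finset.sum_comm]
  refine Finset.sum_congr rfl fun e he => ?_
  refine Eq.trans (sum_fib _ Gp.E
    (fun f : Gp.V × Gp.V => (embed G1 Gp e f.1, embed G1 Gp e f.2))
    (fun f => G1.cap e.1 * Gp.cap f) (fun q => ind (¬((q.1 ∈ S) ↔ (q.2 ∈ S)))) _ ?_) ?_
  · intro f hf
    exact Finset.mem_biUnion.2 ⟨e, he, Finset.mem_image_of_mem _ hf⟩
  · rw [wsum, Finset.mul_sum]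
    simp only [mem_tr, mul_assoc]

lemma cutDem_glue (G1 Gp : SCI) (S : Finset (glueV G1 Gp)) :
    (glue G1 Gp).cutDem S = G1.cutDem (tr1 G1 Gp S) +
      ∑ e ∈ G1.E.attach, G1.cap e.1 * Gp.cutDem (tr G1 Gp S e) := by
  refine (cutDem_eq _ _).trans ?_
  simp only [cutDem_eq]
  change ∑ p ∈ ((G1.Dm.image fun q =>
          ((Sum.inl q.1 : glueV G1 Gp), (Sum.inl q.2 : glueV G1 Gp))) ∪
        (G1.E.attach.biUnion fun e =>
          Gp.Dm.image fun f => (embed G1 Gp e f.1, embed G1 Gp e f.2))),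
      ((∑ q ∈ G1.Dm,
        if ((Sum.inl q.1 : glueV G1 Gp), (Sum.inl q.2 : glueV G1 Gp)) = p
        then G1.dem q else 0) +
      ∑ e ∈ G1.E.attach, ∑ f ∈ Gp.Dm,
        if (embed G1 Gp e f.1, embed G1 Gp e f.2) = p then G1.cap e.1 * Gp.dem f else 0) *
        ind (¬((p.1 ∈ S) ↔ (p.2 ∈ S))) = _
  simp only [add_mul]
  rw [Finset.sum_add_distrib]
  congr 1
  · refine Eq.trans (sum_fib _ G1.Dm
      (fun q => ((Sum.inl q.1 : glueV G1 Gp), (Sum.inl q.2 : glueV G1 Gp)))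
      (fun f => G1.dem f) (fun q => ind (¬((q.1 ∈ S) ↔ (q.2 ∈ S)))) _ ?_) ?_
    · intro f hf
      exact Finset.mem_union_left _ (Finset.mem_image_of_mem _ hf)
    · simp only [mem_tr1, wsum]
  simp only [Finset.sum_mul (s := G1.E.attach)]
  rw [Finset.sum_comm]
  refine Finset.sum_congr rfl fun e he => ?_
  refine Eq.trans (sum_fib _ Gp.Dm
    (fun f : Gp.V × Gp.V => (embed G1 Gp e f.1, embed G1 Gp e f.2))
    (fun f => G1.cap e.1 * Gp.dem f) (fun q => ind (¬((q.1 ∈ S) ↔ (q.2 ∈ S)))) _ ?_) ?_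
  · intro f hf
    exact Finset.mem_union_right _
      (Finset.mem_biUnion.2 ⟨e, he, Finset.mem_image_of_mem _ hf⟩)
  · rw [wsum, Finset.mul_sum]
    simp only [mem_tr, mul_assoc]

lemma Gpow_st (G1 : SCI) (h : G1.s ≠ G1.t) (k : ℕ) : (Gpow G1 k).s ≠ (Gpow G1 k).t := by
  cases k with
  | zero => exact h
  | succ k =>
    intro h'
    exact h (Sum.inl_injective h')

lemma cutCap_attach (G1 : SCI) (S : Finset G1.V) :
    G1.cutCap S = ∑ e ∈ G1.E.attach, G1.cap e.1 *
      ind (¬((e.1.1 ∈ S) ↔ (e.1.2 ∈ S))) := by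
  rw [cutCap_eq, wsum, ← Finset.sum_attach]

/-- Completeness for the powering. -/
lemma complete (G1 : SCI) (hst : G1.s ≠ G1.t) (c : ℝ) (S0 : Finset G1.V)
    (hs : G1.s ∈ S0) (ht : G1.t ∉ S0)
    (hE : ∀ e ∈ G1.E, e.2 ∈ S0 → e.1 ∈ S0)
    (hcap : G1.cutCap S0 = 1) (hdem : G1.cutDem S0 = c) (k : ℕ) :
    ∃ S : Finset (Gpow G1 k).V, (Gpow G1 k).s ∈ S ∧ (Gpow G1 k).t ∉ S ∧
      (Gpow G1 k).cutCap S = 1 ∧ (Gpow G1 k).cutDem S = (k + 1) * c := by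
  induction k with
  | zero => exact ⟨S0, hs, ht, hcap, hdem.trans (by simp)⟩
  | succ k ih =>
    obtain ⟨Sp, ps, pt, pc, pd⟩ := ih
    have hpst := Gpow_st G1 hst k
    change ∃ S : Finset (glueV G1 (Gpow G1 k)), (Sum.inl G1.s : glueV G1 (Gpow G1 k)) ∈ S ∧
      (Sum.inl G1.t : glueV G1 (Gpow G1 k)) ∉ S ∧ (glue G1 (Gpow G1 k)).cutCap S = 1 ∧
      (glue G1 (Gpow G1 k)).cutDem S = _
    generalize Gpow G1 k = Gp at *
    let S : Finset (glueV G1 Gp) := Finset.univ.filter fun x =>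
      match x with
      | Sum.inl v => v ∈ S0
      | Sum.inr (e, v) => e.1.1 ∈ S0 ∧ (e.1.2 ∈ S0 ∨ v.1 ∈ Sp)
    have h1 : tr1 G1 Gp S = S0 := by
      ext v; rw [mem_tr1]; simp [S]
    have h2 : ∀ e v, v ∈ tr G1 Gp S e ↔ e.1.1 ∈ S0 ∧ (e.1.2 ∈ S0 ∨ v ∈ Sp) := by
      intro e v
      have he := hE e.1 e.2
      by_cases hvs : v = Gp.s
      · subst hvs
        rw [s_mem_tr, h1]
        tauto
      by_cases hvt : v = Gp.t
      · subst hvt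
        rw [t_mem_tr _ _ hpst, h1]
        tauto
      · rw [mem_tr]
        simp [embed, hvs, hvt, S]
    have h3 : ∀ e, ¬((e.1.1 ∈ S0) ↔ (e.1.2 ∈ S0)) → tr G1 Gp S e = Sp := by
      intro e h
      have he := hE e.1 e.2
      ext v; rw [h2]; tauto
    have h4 : ∀ e, ((e.1.1 ∈ S0) ↔ (e.1.2 ∈ S0)) → ∀ x y,
        ¬¬(x ∈ tr G1 Gp S e ↔ y ∈ tr G1 Gp S e) := by
      intro e h x y
      rw [h2, h2]; tauto
    have key : ∀ e, Gp.cutCap (tr G1 Gp S e) = ind (¬((e.1.1 ∈ S0) ↔ (e.1.2 ∈ S0))) := by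
      intro e
      by_cases h : (e.1.1 ∈ S0) ↔ (e.1.2 ∈ S0)
      · rw [ind_f (not_not.2 h), cutCap_eq]
        refine Finset.sum_eq_zero fun f _ => ?_
        rw [ind_f (h4 e h _ _), mul_zero]
      · rw [ind_t h, h3 e h, pc]
    have key2 : ∀ e, Gp.cutDem (tr G1 Gp S e) =
        ind (¬((e.1.1 ∈ S0) ↔ (e.1.2 ∈ S0))) * ((k + 1) * c) := by
      intro e
      by_cases h : (e.1.1 ∈ S0) ↔ (e.1.2 ∈ S0)
      · rw [ind_f (not_not.2 h), cutDem_eq, zero_mul]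
        refine Finset.sum_eq_zero fun f _ => ?_
        rw [ind_f (h4 e h _ _), mul_zero]
      · rw [ind_t h, h3 e h, pd, one_mul]
    refine ⟨S, ?_, ?_, ?_, ?_⟩
    · simpa [S] using hs
    · simpa [S] using ht
    · rw [cutCap_glue]
      simp only [key]
      rw [← cutCap_attach, hcap]
    · rw [cutDem_glue, h1, hdem]
      simp only [key2, ← mul_assoc (G1.cap _)]
      rw [← Finset.sum_mul, ← cutCap_attach, hcap]
      push_cast; ring

/-- Soundness for the powering. -/
lemma sound (G1 : SCI) (hst : G1.s ≠ G1.t) (s : ℝ) (h0 : 0 ≤ s)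
    (hc : ∀ e ∈ G1.E, 0 ≤ G1.cap e)
    (hsep : ∀ S : Finset G1.V, ¬(G1.s ∈ S ↔ G1.t ∈ S) → G1.cutCap S = 1 ∧ G1.cutDem S ≤ s)
    (hns : ∀ S : Finset G1.V, (G1.s ∈ S ↔ G1.t ∈ S) → G1.cutDem S ≤ G1.cutCap S)
    (k : ℕ) : ∀ S : Finset (Gpow G1 k).V,
      ind (¬((Gpow G1 k).s ∈ S ↔ (Gpow G1 k).t ∈ S)) ≤ (Gpow G1 k).cutCap S ∧
      (Gpow G1 k).cutDem S ≤ (1 + k * s) * (Gpow G1 k).cutCap S -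
        (1 - s) * ind (¬((Gpow G1 k).s ∈ S ↔ (Gpow G1 k).t ∈ S)) := by
  have hc0 : ∀ S : Finset G1.V, 0 ≤ G1.cutCap S := fun S =>
    Finset.sum_nonneg fun e he => hc e (Finset.mem_of_mem_filter e he)
  induction k with
  | zero =>
    intro S
    change ind (¬(G1.s ∈ S ↔ G1.t ∈ S)) ≤ G1.cutCap S ∧
      G1.cutDem S ≤ _ * G1.cutCap S - (1 - s) * ind (¬(G1.s ∈ S ↔ G1.t ∈ S))
    by_cases h : (G1.s ∈ S ↔ G1.t ∈ S)
    · have := hns S h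
      rw [ind_f (not_not.2 h)]
      exact ⟨hc0 S, by push_cast; linarith⟩
    · have := hsep S h
      rw [ind_t h]
      exact ⟨this.1.ge, by rw [this.1]; push_cast; linarith⟩
  | succ k ih =>
    have hpst := Gpow_st G1 hst k
    change ∀ S : Finset (glueV G1 (Gpow G1 k)),
      ind (¬((Sum.inl G1.s : glueV G1 (Gpow G1 k)) ∈ S ↔
        (Sum.inl G1.t : glueV G1 (Gpow G1 k)) ∈ S)) ≤
          (glue G1 (Gpow G1 k)).cutCap S ∧
      (glue G1 (Gpow G1 k)).cutDem S ≤ _ * (glue G1 (Gpow G1 k)).cutCap S -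
        (1 - s) * ind (¬((Sum.inl G1.s : glueV G1 (Gpow G1 k)) ∈ S ↔
        (Sum.inl G1.t : glueV G1 (Gpow G1 k)) ∈ S))
    generalize Gpow G1 k = Gp at *
    intro S
    simp only [← mem_tr1]
    have hle : G1.cutCap (tr1 G1 Gp S) ≤ (glue G1 Gp).cutCap S := by
      rw [cutCap_glue, cutCap_attach]
      refine Finset.sum_le_sum fun e _ => mul_le_mul_of_nonneg_left ?_ (hc _ e.2)
      have := (ih (tr G1 Gp S e)).1
      simpa only [s_mem_tr, t_mem_tr _ _ hpst] using this
    have hd : (glue G1 Gp).cutDem S ≤ G1.cutDem (tr1 G1 Gp S) +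
        ((1 + k * s) * (glue G1 Gp).cutCap S - (1 - s) * G1.cutCap (tr1 G1 Gp S)) := by
      rw [cutCap_glue, cutCap_attach, cutDem_glue, Finset.mul_sum, Finset.mul_sum,
        ← Finset.sum_sub_distrib]
      refine add_le_add_right (Finset.sum_le_sum fun e _ => ?_) _
      have := (ih (tr G1 Gp S e)).2
      simp only [s_mem_tr, t_mem_tr _ _ hpst] at this
      have := mul_le_mul_of_nonneg_left this (hc _ e.2)
      linarith
    have hsl := mul_le_mul_of_nonneg_left hle h0
    have hp := hc0 (tr1 G1 Gp S)
    generalize tr1 G1 Gp S = T at *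
    by_cases h : (G1.s ∈ T ↔ G1.t ∈ T)
    · have := hns T h
      rw [ind_f (not_not.2 h)]
      exact ⟨by linarith, by push_cast; linarith⟩
    · have := hsep T h
      rw [ind_t h]
      rw [this.1] at hle hd hsl
      exact ⟨hle, by push_cast; linarith⟩

lemma base_cap (n : ℕ) (H : SimpleGraph (Fin n)) [DecidableRel H.Adj]
    (S : Finset (Fin n ⊕ Bool)) :
    (buildG1 n H).cutCap S = ∑ i : Fin n, ((H.degree i : ℝ) / (2 * H.edgeFinset.card)) *
      (ind (¬(Sum.inr false ∈ S ↔ Sum.inl i ∈ S)) +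
       ind (¬(Sum.inl i ∈ S ↔ Sum.inr true ∈ S))) := by
  refine (cutCap_eq _ _).trans ?_
  change ∑ e ∈ (Finset.univ.image fun i : Fin n =>
          ((Sum.inr false : Fin n ⊕ Bool), (Sum.inl i : Fin n ⊕ Bool))) ∪
       (Finset.univ.image fun i : Fin n =>
          ((Sum.inl i : Fin n ⊕ Bool), (Sum.inr true : Fin n ⊕ Bool))),
      (buildG1 n H).cap e * ind (¬((e.1 ∈ S) ↔ (e.2 ∈ S))) = _
  rw [Finset.sum_union]
  · rw [Finset.sum_image, Finset.sum_image, ← Finset.sum_add_distrib]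
    · refine Finset.sum_congr rfl fun i _ => ?_
      rw [mul_add]
      rfl
    · intro a _ b _ h; simpa using h
    · intro a _ b _ h; simpa using h
  · rw [Finset.disjoint_left]
    intro x hx hy
    simp only [Finset.mem_image] at hx hy
    obtain ⟨i, _, rfl⟩ := hx
    obtain ⟨j, _, h⟩ := hy
    simp at h

lemma bdry_eq {n : ℕ} (H : SimpleGraph (Fin n)) [DecidableRel H.Adj] (A : Finset (Fin n)) :
    (bdry H A : ℝ) = ∑ i, ∑ j, if H.Adj i j ∧ i ∈ A ∧ j ∉ A then 1 else 0 := by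
  unfold bdry
  push_cast
  rw [← Finset.sum_filter_add_sum_filter_not Finset.univ (fun i => i ∈ A) (fun i => ∑ j, _)]
  have : ∑ i ∈ Finset.univ.filter (fun i => ¬ i ∈ A),
      ∑ j, (if H.Adj i j ∧ i ∈ A ∧ j ∉ A then (1:ℝ) else 0) = 0 := by
    refine Finset.sum_eq_zero fun i hi => Finset.sum_eq_zero fun j _ => ?_
    simp at hi; simp [hi]
  rw [this, add_zero]
  refine Finset.sum_congr (by ext; simp) fun i hi => ?_
  rw [← Finset.sum_filter_add_sum_filter_not Finset.univ (fun j => j ∈ A) (fun j => _)]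
  have h2 : ∑ j ∈ Finset.univ.filter (fun j => j ∈ A),
      (if H.Adj i j ∧ i ∈ A ∧ j ∉ A then (1:ℝ) else 0) = 0 := by
    refine Finset.sum_eq_zero fun j hj => ?_
    simp at hj; simp [hj]
  rw [h2, zero_add]
  refine Finset.sum_congr (by ext; simp) fun j hj => ?_
  simp at hj hi
  simp [hi, hj]

lemma bdry_compl {n : ℕ} (H : SimpleGraph (Fin n)) [DecidableRel H.Adj] (A : Finset (Fin n)) :
    (bdry H Aᶜ : ℝ) = bdry H A := by
  rw [bdry_eq, bdry_eq, Finset.sum_comm]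
  refine Finset.sum_congr rfl fun i _ => Finset.sum_congr rfl fun j _ => ?_
  have := H.adj_comm i j
  congr 1
  simp only [Finset.mem_compl, eq_iff_iff]; tauto

lemma bdry_le_vol {n : ℕ} (H : SimpleGraph (Fin n)) [DecidableRel H.Adj] (A : Finset (Fin n)) :
    (bdry H A : ℝ) ≤ ∑ i, if i ∈ A then (H.degree i : ℝ) else 0 := by
  rw [bdry_eq]
  refine Finset.sum_le_sum fun i _ => ?_
  split_ifs with h
  · have : (H.degree i : ℝ) = ∑ j, if H.Adj i j then 1 else 0 := by
      rw [Finset.sum_boole, ← SimpleGraph.card_neighborFinset_eq_degree,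
        SimpleGraph.neighborFinset_eq_filter]
    rw [this]
    refine Finset.sum_le_sum fun j _ => ?_
    split_ifs <;> first | tauto | norm_num
  · simp [h]

lemma sum_deg {n : ℕ} (H : SimpleGraph (Fin n)) [DecidableRel H.Adj] :
    ∑ i, (H.degree i : ℝ) = 2 * H.edgeFinset.card := by
  exact_mod_cast H.sum_degrees_eq_twice_card_edges

lemma bdry_le_card {n : ℕ} (H : SimpleGraph (Fin n)) [DecidableRel H.Adj]
    (A : Finset (Fin n)) : (bdry H A : ℝ) ≤ H.edgeFinset.card := by
  have h1 := bdry_le_vol H A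
  have h2 := bdry_le_vol H Aᶜ
  rw [bdry_compl] at h2
  have h3 : (∑ i, if i ∈ A then (H.degree i : ℝ) else 0) +
      (∑ i, if i ∈ Aᶜ then (H.degree i : ℝ) else 0) = 2 * H.edgeFinset.card := by
    rw [← Finset.sum_add_distrib, ← sum_deg]
    refine Finset.sum_congr rfl fun i _ => ?_
    by_cases h : i ∈ A <;> simp [h]
  linarith

lemma base_dem (n : ℕ) (H : SimpleGraph (Fin n)) [DecidableRel H.Adj]
    (S : Finset (Fin n ⊕ Bool)) (A : Finset (Fin n)) (hA : ∀ i, Sum.inl i ∈ S ↔ i ∈ A) :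
    (buildG1 n H).cutDem S = bdry H A / H.edgeFinset.card := by
  refine (cutDem_eq _ _).trans ?_
  change ∑ e ∈ (Finset.univ.filter fun p : Fin n × Fin n => H.Adj p.1 p.2 ∧ p.1 < p.2).image
          (fun p => ((Sum.inl p.1 : Fin n ⊕ Bool), (Sum.inl p.2 : Fin n ⊕ Bool))),
      (buildG1 n H).dem e * ind (¬((e.1 ∈ S) ↔ (e.2 ∈ S))) = _
  rw [Finset.sum_image]
  swap
  · rintro ⟨a, b⟩ _ ⟨a', b'⟩ _ h
    simpa using h
  rw [Finset.sum_filter, ← Finset.univ_product_univ, Finset.sum_product]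
  have h1 : (bdry H A : ℝ) = ∑ i, ∑ j, if (H.Adj i j ∧ i < j) ∧ ¬(i ∈ A ↔ j ∈ A)
      then (1:ℝ) else 0 := by
    rw [bdry_eq]
    have h2 : ∀ i j : Fin n, (if H.Adj i j ∧ i ∈ A ∧ j ∉ A then (1:ℝ) else 0) =
        (if (H.Adj i j ∧ i < j) ∧ i ∈ A ∧ j ∉ A then (1:ℝ) else 0) +
        (if (H.Adj i j ∧ j < i) ∧ i ∈ A ∧ j ∉ A then (1:ℝ) else 0) := by
      intro i j
      rcases lt_trichotomy i j with h | h | h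
      · simp [h, h.not_gt]
      · simp [h]
      · simp [h, h.not_gt]
    simp only [h2, Finset.sum_add_distrib]
    rw [Finset.sum_comm (f := fun i j =>
      (if (H.Adj i j ∧ j < i) ∧ i ∈ A ∧ j ∉ A then (1:ℝ) else 0))]
    simp only [← Finset.sum_add_distrib]
    refine Finset.sum_congr rfl fun i _ => Finset.sum_congr rfl fun j _ => ?_
    have := H.adj_comm i j
    by_cases hi : i ∈ A <;> by_cases hj : j ∈ A <;> simp [hi, hj, this]
  rw [h1, Finset.sum_div]
  refine Finset.sum_congr rfl fun i _ => ?_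
  rw [Finset.sum_div]
  refine Finset.sum_congr rfl fun j _ => ?_
  simp only [hA]
  by_cases h : H.Adj i j ∧ i < j
  · by_cases h' : (i ∈ A ↔ j ∈ A)
    · rw [ind_f (not_not.2 h'), mul_zero, ite_self, if_neg (fun h2 => h2.2 h'), zero_div]
    · rw [ind_t h', mul_one, if_pos h, if_pos ⟨h, h'⟩]
      exact if_pos h.1
  · rw [if_neg h, if_neg (fun h' => h h'.1), zero_div]

lemma base_cap_sep (n : ℕ) (H : SimpleGraph (Fin n)) [DecidableRel H.Adj]
    (hm : 0 < H.edgeFinset.card) (S : Finset (Fin n ⊕ Bool))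
    (h : ¬(Sum.inr false ∈ S ↔ Sum.inr true ∈ S)) : (buildG1 n H).cutCap S = 1 := by
  rw [base_cap]
  have hm' : (0:ℝ) < H.edgeFinset.card := by exact_mod_cast hm
  have : ∀ i : Fin n, (ind (¬(Sum.inr false ∈ S ↔ Sum.inl i ∈ S)) +
       ind (¬(Sum.inl i ∈ S ↔ Sum.inr true ∈ S))) = 1 := by
    intro i
    by_cases h1 : Sum.inr false ∈ S <;> by_cases h2 : Sum.inr true ∈ S <;>
      by_cases h3 : Sum.inl i ∈ S <;> simp [h1, h2, h3, ind] <;> tauto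
  simp only [this, mul_one]
  rw [← Finset.sum_div, sum_deg]
  field_simp

lemma base_ns (n : ℕ) (H : SimpleGraph (Fin n)) [DecidableRel H.Adj]
    (hm : 0 < H.edgeFinset.card) (S : Finset (Fin n ⊕ Bool))
    (h : (Sum.inr false ∈ S ↔ Sum.inr true ∈ S)) :
    (buildG1 n H).cutDem S ≤ (buildG1 n H).cutCap S := by
  have hm' : (0:ℝ) < H.edgeFinset.card := by exact_mod_cast hm
  let B : Finset (Fin n) := Finset.univ.filter fun i => ¬(Sum.inr false ∈ S ↔ Sum.inl i ∈ S)
  have hB : (buildG1 n H).cutDem S = bdry H B / H.edgeFinset.card := by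
    by_cases hs : Sum.inr false ∈ S
    · rw [← bdry_compl]
      exact base_dem n H S _ (by intro i; simp [B, hs])
    · exact base_dem n H S _ (by intro i; simp [B, hs])
  rw [hB, base_cap]
  refine (div_le_div_of_nonneg_right (bdry_le_vol H B) hm'.le).trans (le_of_eq ?_)
  rw [Finset.sum_div]
  refine Finset.sum_congr rfl fun i _ => ?_
  by_cases h1 : Sum.inr false ∈ S <;> by_cases h3 : Sum.inl i ∈ S <;>
    simp [B, ← h, h1, h3, ind] <;> field_simp <;> norm_num

lemma base_E (n : ℕ) (H : SimpleGraph (Fin n)) [DecidableRel H.Adj]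
    (P : (Fin n ⊕ Bool) × (Fin n ⊕ Bool) → Prop)
    (h1 : ∀ i, P (Sum.inr false, Sum.inl i)) (h2 : ∀ i, P (Sum.inl i, Sum.inr true)) :
    ∀ e ∈ (buildG1 n H).E, P e := by
  intro e he
  rcases Finset.mem_union.1 he with he | he
  · obtain ⟨i, _, rfl⟩ := Finset.mem_image.1 he
    exact h1 i
  · obtain ⟨i, _, rfl⟩ := Finset.mem_image.1 he
    exact h2 i

/-- Let `G_ℓ` be obtained by the powering construction from the base
instance `G₁` built from a connected unweighted MaxCut instance `H` with `m` edges.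
(i) If `H` has a cut of size `c·m` with `c > 0`, then `G_ℓ` has a cut of sparsity at
most `1/(ℓc)`.
(ii) If every cut of `H` has size at most `s·m` with `s > 0`, then every cut of `G_ℓ`
that separates positive demand has sparsity at least `1/(1 + (ℓ−1)s)`. -/
theorem stmt_10 (n : ℕ) (H : SimpleGraph (Fin n)) [DecidableRel H.Adj]
    (hconn : H.Connected) (hm : 0 < H.edgeFinset.card)
    (ℓ : ℕ) (hℓ : 1 ≤ ℓ) :
    (∀ c : ℝ, 0 < c → (∃ A : Finset (Fin n), (bdry H A : ℝ) = c * H.edgeFinset.card) →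
      ∃ S : Finset (Gpow (buildG1 n H) (ℓ - 1)).V,
        0 < (Gpow (buildG1 n H) (ℓ - 1)).cutDem S ∧
        (Gpow (buildG1 n H) (ℓ - 1)).cutCap S / (Gpow (buildG1 n H) (ℓ - 1)).cutDem S
          ≤ 1 / ((ℓ : ℝ) * c)) ∧
    (∀ s : ℝ, 0 < s → (∀ A : Finset (Fin n), (bdry H A : ℝ) ≤ s * H.edgeFinset.card) →
      ∀ S : Finset (Gpow (buildG1 n H) (ℓ - 1)).V,
        0 < (Gpow (buildG1 n H) (ℓ - 1)).cutDem S →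
        1 / (1 + ((ℓ : ℝ) - 1) * s) ≤
          (Gpow (buildG1 n H) (ℓ - 1)).cutCap S / (Gpow (buildG1 n H) (ℓ - 1)).cutDem S) := by
  have hm' : (0:ℝ) < H.edgeFinset.card := by exact_mod_cast hm
  have hst : (buildG1 n H).s ≠ (buildG1 n H).t := by
    intro h
    have : (Sum.inr false : Fin n ⊕ Bool) = Sum.inr true := h
    simp at this
  obtain ⟨k, rfl⟩ : ∃ k, ℓ = k + 1 := ⟨ℓ - 1, by omega⟩
  rw [Nat.add_sub_cancel]
  have hk : (0:ℝ) ≤ k := Nat.cast_nonneg k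
  refine ⟨?_, ?_⟩
  · rintro c hc ⟨A, hA⟩
    let S0 : Finset (Fin n ⊕ Bool) := Finset.univ.filter fun x =>
      match x with
      | Sum.inl i => i ∈ A
      | Sum.inr b => b = false
    have m1 : ∀ i, Sum.inl i ∈ S0 ↔ i ∈ A := by intro i; simp [S0]
    have m2 : Sum.inr false ∈ S0 := by simp [S0]
    have m3 : Sum.inr true ∉ S0 := by simp [S0]
    obtain ⟨S, _, _, h1, h2⟩ := complete (buildG1 n H) hst c S0 m2 m3 
      (base_E n H (fun e => e.2 ∈ S0 → e.1 ∈ S0) (fun i _ => m2) (fun i h => absurd h m3))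
      (base_cap_sep n H hm S0 (by tauto))
      (by rw [base_dem n H S0 A m1, hA]; field_simp) k
    refine ⟨S, ?_, ?_⟩
    · rw [h2]; positivity
    · rw [h1, h2]; push_cast; exact le_rfl
  · intro s hs hb S hS
    have hmin : 0 ≤ min s 1 := le_min hs.le zero_le_one
    have h := (sound (buildG1 n H) hst (min s 1) hmin (by
      refine base_E n H (fun e => 0 ≤ (buildG1 n H).cap e) (fun i => ?_) (fun i => ?_)
      · change (0:ℝ) ≤ (H.degree i : ℝ) / (2 * H.edgeFinset.card)
        positivity
      · change (0:ℝ) ≤ (H.degree i : ℝ) / (2 * H.edgeFinset.card)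
        positivity) (by
      intro T hT
      refine ⟨base_cap_sep n H hm T hT, ?_⟩
      rw [base_dem n H T (Finset.univ.filter fun i => Sum.inl i ∈ T)
          (fun i => (by rw [Finset.mem_filter]; exact ⟨fun h => ⟨Finset.mem_univ _, h⟩, fun h => h.2⟩)),
        div_le_iff₀ hm']
      rcases min_choice s 1 with h | h
      · rw [h]; exact hb _
      · rw [h, one_mul]; exact bdry_le_card H _) (fun T hT => base_ns n H hm T hT) k S)
    obtain ⟨ha, hd⟩ := h
    have hc0 : 0 ≤ (Gpow (buildG1 n H) k).cutCap S := le_trans (ind_nonneg _) ha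
    have h1 : 0 ≤ (1 - min s 1) * ind (¬((Gpow (buildG1 n H) k).s ∈ S ↔
        (Gpow (buildG1 n H) k).t ∈ S)) :=
      mul_nonneg (sub_nonneg.2 (min_le_right _ _)) (ind_nonneg _)
    have h2 : (1 + k * min s 1) * (Gpow (buildG1 n H) k).cutCap S ≤
        (1 + k * s) * (Gpow (buildG1 n H) k).cutCap S := by
      gcongr
      exact min_le_left _ _
    push_cast
    rw [add_sub_cancel_right, div_le_div_iff₀ (by positivity) hS]
    linarith

end Stmt10
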